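/- arXiv:2508.12127 — 3 statements merged into one kernel-verified Lean document; each statement's English description precedes it below -/
import Mathlib

section
/- Let $p$ be a prime, $\mathcal{M}$ an arbitrary subset of $\mathbb{F}_p^*$ with $|\mathcal{M}| = M$, and $\mathcal{I} = \{1, 2, \ldots, N\} \pmod p \subseteq \mathbb{F}_p^*$ with $N < p$. Then the product set satisfies $|\mathcal{I} \cdot \mathcal{M}| \gg \min\{ p/\log^2 N, \; N^2/\log^2 N, \; NM/\log N \}$. -/
open Finset

lemma aux_pi (N : ℕ) (hN : 2 ≤ N) :
    (N : ℝ) ≤ 16 * ((Nat.primesLE N).card * Real.log N) := by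
  have hL : 0 < Real.log N := Real.log_pos (by exact_mod_cast hN)
  have h := Chebyshev.pi_ge N
  rw [div_le_iff₀ hL, ← Nat.primesLE_card_eq_primeCounting] at h
  have h2 : Real.log ((N : ℝ) + 1) = 2 * Real.log 2 + Real.log (((N : ℝ) + 1) / 4) := by
    rw [Real.log_div (by positivity) (by norm_num)]
    have : Real.log 4 = 2 * Real.log 2 := by
      rw [show (4 : ℝ) = 2 ^ 2 by norm_num, Real.log_pow]; norm_num
    linarith
  have h3 := Real.log_le_sub_one_of_pos (show 0 < ((N : ℝ) + 1) / 4 by positivity)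
  have h4 := Real.log_two_gt_d9
  have h5 := Real.log_two_lt_d9
  have hN' : (2 : ℝ) ≤ N := by exact_mod_cast hN
  nlinarith

lemma aux_slope (p N : ℕ) (hp : 0 < p) (hN : 0 < N) (A : Finset (ℕ × ℕ))
    (h1 : ∀ a ∈ A, 0 < a.1 ∧ a.2 ≤ a.1 ∧ a.1 ≤ N)
    (h2 : ∀ a ∈ A, ∀ b ∈ A, (p : ℤ) ∣ (a.1 : ℤ) * b.2 - a.2 * b.1)
    (h3 : ∀ a ∈ A, ∀ b ∈ A, a.1 * b.2 = a.2 * b.1 → a = b) :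
    (A.card : ℝ) ≤ (N : ℝ) ^ 2 / p + 1 := by
  have hp' : (0 : ℝ) < p := by exact_mod_cast hp
  have hN' : (0 : ℝ) < N := by exact_mod_cast hN
  set R : ℝ := (N : ℝ) ^ 2 / p with hR
  have hRpos : 0 < R := by positivity
  have hcard : A.card ≤ (range (⌊R⌋₊ + 1)).card := by
    apply card_le_card_of_injOn (fun a : ℕ × ℕ => ⌊(a.2 : ℝ) / a.1 * R⌋₊)
    · intro a ha
      obtain ⟨ha1, ha2, ha3⟩ := h1 a ha
      simp only [coe_range, Set.mem_Iio, Nat.lt_succ_iff]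
      apply Nat.floor_le_floor
      have : (a.2 : ℝ) / a.1 ≤ 1 := by
        rw [div_le_one (by exact_mod_cast ha1)]; exact_mod_cast ha2
      nlinarith
    · intro a ha b hb hab
      obtain ⟨ha1, ha2, ha3⟩ := h1 a ha
      obtain ⟨hb1, hb2, hb3⟩ := h1 b hb
      simp only at hab
      have a1 : (0 : ℝ) < a.1 := by exact_mod_cast ha1
      have b1 : (0 : ℝ) < b.1 := by exact_mod_cast hb1
      have a3 : (a.1 : ℝ) ≤ N := by exact_mod_cast ha3
      have b3 : (b.1 : ℝ) ≤ N := by exact_mod_cast hb3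
      have e1 := Nat.floor_le (show 0 ≤ (a.2 : ℝ) / a.1 * R by positivity)
      have e2 := Nat.lt_floor_add_one ((a.2 : ℝ) / a.1 * R)
      have e3 := Nat.floor_le (show 0 ≤ (b.2 : ℝ) / b.1 * R by positivity)
      have e4 := Nat.lt_floor_add_one ((b.2 : ℝ) / b.1 * R)
      rw [hab] at e1 e2
      have key : |(b.2 : ℝ) / b.1 * R - (a.2 : ℝ) / a.1 * R| < 1 := by
        rw [abs_lt]; constructor <;> linarith
      have eq : (b.2 : ℝ) / b.1 * R - (a.2 : ℝ) / a.1 * R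
          = ((a.1 : ℝ) * b.2 - a.2 * b.1) * (R / (a.1 * b.1)) := by
        field_simp
      have hQ : 1 / p ≤ R / ((a.1 : ℝ) * b.1) := by
        rw [hR, div_div, div_le_div_iff₀ hp' (by positivity)]
        nlinarith [mul_le_mul a3 b3 b1.le hN'.le]
      rw [eq, abs_mul, abs_of_pos (show 0 < R / ((a.1 : ℝ) * b.1) by positivity)] at key
      have hlt : |(a.1 : ℝ) * b.2 - a.2 * b.1| < p := by
        have : |(a.1 : ℝ) * b.2 - a.2 * b.1| * (1 / p) < 1 :=
          lt_of_le_of_lt (mul_le_mul_of_nonneg_left hQ (abs_nonneg _)) key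
        rw [mul_one_div, div_lt_one hp'] at this
        exact this
      have hlt' : |(a.1 : ℤ) * b.2 - a.2 * b.1| < p := by exact_mod_cast hlt
      have := Int.eq_zero_of_abs_lt_dvd (h2 a ha b hb) hlt'
      apply h3 a ha b hb
      zify; linarith
  rw [card_range] at hcard
  have : (A.card : ℝ) ≤ ⌊R⌋₊ + 1 := by exact_mod_cast hcard
  linarith [Nat.floor_le hRpos.le]

lemma aux_fiber (p N : ℕ) (hp : p.Prime) (hN : 2 ≤ N) (m n : ZMod p)
    (hm : m ≠ 0) (hn : n ≠ 0) (K : Finset (ℕ × ℕ))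
    (hK : ∀ a ∈ K, a.1.Prime ∧ a.2.Prime ∧ a.1 ≤ N ∧ a.2 ≤ N ∧ a.1 ≠ a.2 ∧
      (a.1 : ZMod p) * m = a.2 * n) :
    (K.card : ℝ) ≤ 2 * ((N : ℝ) ^ 2 / p + 1) := by
  haveI := Fact.mk hp
  have hdvd : ∀ a ∈ K, ∀ b ∈ K, (p : ℤ) ∣ (a.1 : ℤ) * b.2 - a.2 * b.1 := by
    intro a ha b hb
    rw [← ZMod.intCast_zmod_eq_zero_iff_dvd] 
    push_cast
    have e1 := (hK a ha).2.2.2.2.2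
    have e2 := (hK b hb).2.2.2.2.2
    have : ((a.1 : ZMod p) * b.2 - a.2 * b.1) * (m * n) = 0 := by
      linear_combination (b.2 : ZMod p) * n * e1 - (a.2 : ZMod p) * n * e2
    exact (mul_eq_zero.1 this).resolve_right (mul_ne_zero hm hn)
  have hinj : ∀ a ∈ K, ∀ b ∈ K, a.1 * b.2 = a.2 * b.1 → a = b := by
    intro a ha b hb h
    obtain ⟨pa1, pa2, -, -, hne, -⟩ := hK a ha
    obtain ⟨pb1, pb2, -, -, -, -⟩ := hK b hb
    have hd : a.1 ∣ a.2 * b.1 := ⟨b.2, h.symm⟩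
    have e1 : a.1 = b.1 := by
      rcases pa1.dvd_mul.1 hd with h' | h'
      · exact absurd ((Nat.prime_dvd_prime_iff_eq pa1 pa2).1 h') hne
      · exact (Nat.prime_dvd_prime_iff_eq pa1 pb1).1 h'
    have e2 : b.2 = a.2 := by
      rw [e1, mul_comm] at h
      exact Nat.eq_of_mul_eq_mul_right pb1.pos h
    exact Prod.ext e1 e2.symm
  have hA := aux_slope p N hp.pos (by omega) (K.filter (fun a => a.2 ≤ a.1))
    (fun a ha => by
      rw [mem_filter] at ha
      exact ⟨(hK a ha.1).1.pos, ha.2, (hK a ha.1).2.2.1⟩)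
    (fun a ha b hb => hdvd a (mem_filter.1 ha).1 b (mem_filter.1 hb).1)
    (fun a ha b hb => hinj a (mem_filter.1 ha).1 b (mem_filter.1 hb).1)
  have hB := aux_slope p N hp.pos (by omega)
    ((K.filter (fun a => ¬ a.2 ≤ a.1)).image Prod.swap)
    (fun a ha => by
      obtain ⟨b, hb, rfl⟩ := mem_image.1 ha
      rw [mem_filter] at hb
      exact ⟨(hK b hb.1).2.1.pos, (not_le.1 hb.2).le, (hK b hb.1).2.2.2.1⟩)
    (fun a ha b hb => by
      obtain ⟨a, ha2, rfl⟩ := mem_image.1 ha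
      obtain ⟨b, hb2, rfl⟩ := mem_image.1 hb
      have := hdvd a (mem_filter.1 ha2).1 b (mem_filter.1 hb2).1
      rw [← dvd_neg] at this
      simpa using this)
    (fun a ha b hb h => by
      obtain ⟨a, ha2, rfl⟩ := mem_image.1 ha
      obtain ⟨b, hb2, rfl⟩ := mem_image.1 hb
      rw [hinj a (mem_filter.1 ha2).1 b (mem_filter.1 hb2).1 h.symm])
  rw [card_image_of_injective _ Prod.swap_injective] at hB
  have := card_filter_add_card_filter_not (s := K) (fun a => a.2 ≤ a.1)
  have h' : (K.card : ℝ) = (K.filter (fun a => a.2 ≤ a.1)).card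
      + (K.filter (fun a => ¬ a.2 ≤ a.1)).card := by exact_mod_cast this.symm
  linarith

lemma aux_cs {α β : Type*} [DecidableEq α] [DecidableEq β] (S : Finset α) (f : α → β) :
    S.card ^ 2 ≤ (S.image f).card * ((S ×ˢ S).filter (fun a => f a.1 = f a.2)).card := by
  have h1 : S.card = ∑ t ∈ S.image f, (S.filter (fun a => f a = t)).card :=
    card_eq_sum_card_image f S
  have h2 : ((S ×ˢ S).filter (fun a => f a.1 = f a.2)).card
      = ∑ t ∈ S.image f, (S.filter (fun a => f a = t)).card ^ 2 := by
    rw [card_eq_sum_card_fiberwise (f := fun a : α × α => f a.1) (t := S.image f)]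
    · apply sum_congr rfl
      intro t _
      rw [sq, ← card_product]
      congr 1
      ext ⟨a, b⟩
      simp only [mem_filter, mem_product]
      constructor
      · rintro ⟨⟨⟨h1, h2⟩, h3⟩, h4⟩
        exact ⟨⟨h1, h4⟩, h2, h3 ▸ h4⟩
      · rintro ⟨⟨h1, h4⟩, h2, h3⟩
        exact ⟨⟨⟨h1, h2⟩, h4.trans h3.symm⟩, h4⟩
    · intro a ha
      simp only [coe_filter, mem_product, Set.mem_setOf_eq] at ha
      exact mem_coe.2 (mem_image_of_mem _ ha.1.1)
  rw [h2]
  conv_lhs => rw [h1]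
  exact sq_sum_le_card_mul_sum_sq

lemma aux_energy (p N : ℕ) (hp : p.Prime) (hN : 2 ≤ N) (hNp : N < p)
    (M : Finset (ZMod p)) (hM : ∀ m ∈ M, m ≠ 0) :
    (((((Nat.primesLE N) ×ˢ M) ×ˢ ((Nat.primesLE N) ×ˢ M)).filter
      (fun a => (a.1.1 : ZMod p) * a.1.2 = (a.2.1 : ZMod p) * a.2.2)).card : ℝ)
    ≤ (Nat.primesLE N).card * M.card + 2 * ((N : ℝ) ^ 2 / p + 1) * (M.card : ℝ) ^ 2 := by
  haveI := Fact.mk hp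
  set S := (Nat.primesLE N) ×ˢ M with hS
  set F := (S ×ˢ S).filter
      (fun a => (a.1.1 : ZMod p) * a.1.2 = (a.2.1 : ZMod p) * a.2.2) with hF
  have hsplit := card_filter_add_card_filter_not (s := F) (fun a => a.1.1 = a.2.1)
  have hd : (F.filter (fun a => a.1.1 = a.2.1)).card ≤ S.card := by
    apply card_le_card_of_injOn (fun a => a.1)
    · intro a ha
      simp only [hF, coe_filter, mem_filter, mem_product, Set.mem_setOf_eq] at ha
      exact ha.1.1.1
    · have key : ∀ a ∈ F.filter (fun a => a.1.1 = a.2.1), a.2 = a.1 := by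
        intro a ha
        simp only [hF, hS, mem_filter, mem_product, Nat.mem_primesLE] at ha
        obtain ⟨⟨⟨⟨⟨h1, h2⟩, h3⟩, -⟩, h4⟩, h5⟩ := ha
        rw [← h5] at h4
        have hne : (a.1.1 : ZMod p) ≠ 0 := by
          rw [Ne, ZMod.natCast_eq_zero_iff]
          exact Nat.not_dvd_of_pos_of_lt h2.pos (by omega)
        exact Prod.ext h5.symm (mul_left_cancel₀ hne h4).symm
      intro a ha b hb hab
      have := key a ha
      have := key b hb
      simp only at hab
      refine Prod.ext hab ?_
      rw [key a ha, key b hb, hab]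
  set G := F.filter (fun a => ¬ a.1.1 = a.2.1) with hG
  have ho : (G.card : ℝ) ≤ 2 * ((N : ℝ) ^ 2 / p + 1) * (M.card : ℝ) ^ 2 := by
    have e : G.card = ∑ t ∈ M ×ˢ M, (G.filter (fun a => (a.1.2, a.2.2) = t)).card := by
      apply card_eq_sum_card_fiberwise
      intro a ha
      simp only [hG, hF, hS, coe_filter, mem_filter, mem_product, Set.mem_setOf_eq] at ha
      simp only [mem_coe, mem_product]
      exact ⟨ha.1.1.1.2, ha.1.1.2.2⟩
    rw [e]
    push_cast
    have : ∀ t ∈ M ×ˢ M, ((G.filter (fun a => (a.1.2, a.2.2) = t)).card : ℝ)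
        ≤ 2 * ((N : ℝ) ^ 2 / p + 1) := by
      rintro ⟨m, n⟩ ht
      rw [mem_product] at ht
      have hinj : Set.InjOn (fun a : (ℕ × ZMod p) × (ℕ × ZMod p) => (a.1.1, a.2.1))
          (G.filter (fun a => (a.1.2, a.2.2) = (m, n))) := by
        rintro ⟨⟨a, b⟩, c, d⟩ h ⟨⟨a', b'⟩, c', d'⟩ h' hh
        simp only [coe_filter, Set.mem_setOf_eq, Prod.mk.injEq] at h h' hh ⊢
        obtain ⟨-, rfl, rfl⟩ := h
        obtain ⟨-, rfl, rfl⟩ := h'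
        exact ⟨⟨hh.1, rfl⟩, hh.2, rfl⟩
      rw [← card_image_of_injOn hinj]
      apply aux_fiber p N hp hN m n (hM m ht.1) (hM n ht.2)
      intro a ha
      obtain ⟨⟨⟨q, m'⟩, r, n'⟩, hb, rfl⟩ := mem_image.1 ha
      simp only [hG, hF, hS, mem_filter, mem_product, Nat.mem_primesLE, Prod.mk.injEq] at hb
      obtain ⟨⟨⟨⟨⟨h1, -⟩, h2, -⟩, h3⟩, h4⟩, rfl, rfl⟩ := hb
      exact ⟨h1.2, h2.2, h1.1, h2.1, h4, h3⟩
    refine (sum_le_sum this).trans ?_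
    rw [sum_const, card_product, nsmul_eq_mul]
    push_cast
    apply le_of_eq; ring
  have hs : (S.card : ℝ) = (Nat.primesLE N).card * M.card := by
    rw [hS, card_product]; push_cast; rfl
  have h1 : (F.card : ℝ) = (F.filter (fun a => a.1.1 = a.2.1)).card + G.card := by
    exact_mod_cast hsplit.symm
  have h2 : ((F.filter (fun a => a.1.1 = a.2.1)).card : ℝ) ≤ S.card := by exact_mod_cast hd
  linarith

theorem stmt_8 :
    ∃ c : ℝ, 0 < c ∧ ∀ (p N : ℕ), p.Prime → 2 ≤ N → N < p →
      ∀ (M : Finset (ZMod p)), (∀ m ∈ M, m ≠ 0) →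
      (((((Finset.Icc 1 N) ×ˢ M).image
          (fun q : ℕ × ZMod p => (q.1 : ZMod p) * q.2)).card : ℝ)
        ≥ c * min (min ((p : ℝ) / (Real.log N) ^ 2) ((N : ℝ) ^ 2 / (Real.log N) ^ 2))
            ((N : ℝ) * M.card / Real.log N)) := by
  refine ⟨1 / 1040, by norm_num, ?_⟩
  intro p N hp hN hNp M hM
  have hL : 0 < Real.log N := Real.log_pos (by exact_mod_cast hN)
  have hp' : (0 : ℝ) < p := by exact_mod_cast hp.pos
  have hN' : (0 : ℝ) < N := by exact_mod_cast (show 0 < N by omega)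
  have hpi := aux_pi N hN
  have hE := aux_energy p N hp hN hNp M hM
  have hcs := aux_cs ((Nat.primesLE N) ×ˢ M) (fun q : ℕ × ZMod p => (q.1 : ZMod p) * q.2)
  have hsub : (((Nat.primesLE N) ×ˢ M).image
      (fun q : ℕ × ZMod p => (q.1 : ZMod p) * q.2)).card ≤ (((Finset.Icc 1 N) ×ˢ M).image
          (fun q : ℕ × ZMod p => (q.1 : ZMod p) * q.2)).card := by
    apply card_le_card
    apply image_subset_image
    apply product_subset_product_left
    intro q hq
    rw [Nat.mem_primesLE] at hq
    exact mem_Icc.2 ⟨hq.2.pos, hq.1⟩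
  have hcs2 := hcs.trans (Nat.mul_le_mul_right _ hsub)
  set T := (((Finset.Icc 1 N) ×ˢ M).image
          (fun q : ℕ × ZMod p => (q.1 : ZMod p) * q.2)).card with hT
  set E := ((((Nat.primesLE N) ×ˢ M) ×ˢ ((Nat.primesLE N) ×ˢ M)).filter
      (fun a => (a.1.1 : ZMod p) * a.1.2 = (a.2.1 : ZMod p) * a.2.2)).card with hEdef
  rw [card_product] at hcs2
  have hcs3 : ((Nat.primesLE N).card * (M.card : ℝ)) ^ 2 ≤ T * E := by exact_mod_cast hcs2
  set L := Real.log N with hLdef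
  set P : ℝ := ((Nat.primesLE N).card : ℝ) with hP
  set m : ℝ := (M.card : ℝ) with hm
  set B := min (min ((p : ℝ) / L ^ 2) ((N : ℝ) ^ 2 / L ^ 2)) ((N : ℝ) * m / L) with hB
  have hm0 : 0 ≤ m := by positivity
  have hNL : (N : ℝ) / L ≤ 16 * P := by
    rw [div_le_iff₀ hL]; linarith
  have hNL0 : 0 ≤ (N : ℝ) / L := by positivity
  have hP0 : 0 < P := by
    have : 0 < (N : ℝ) / L := by positivity
    linarith
  have hNL2 : (N : ℝ) ^ 2 / L ^ 2 ≤ 256 * P ^ 2 := by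
    rw [← div_pow]; nlinarith
  have b1 : B ≤ 16 * P * m := by
    refine (min_le_right _ _).trans ?_
    rw [mul_div_right_comm]
    exact mul_le_mul_of_nonneg_right hNL hm0
  have b2 : B ≤ 256 * P ^ 2 := ((min_le_left _ _).trans (min_le_right _ _)).trans hNL2
  have b3 : B * ((N : ℝ) ^ 2 / p) ≤ 256 * P ^ 2 := by
    have : B ≤ p / L ^ 2 := (min_le_left _ _).trans (min_le_left _ _)
    refine (mul_le_mul_of_nonneg_right this (by positivity)).trans (le_trans (le_of_eq ?_) hNL2)
    field_simp
  have hB0 : 0 ≤ B := by positivity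
  have hT0 : (0 : ℝ) ≤ T := by positivity
  rcases hm0.eq_or_lt with h0 | h0
  · rw [← h0] at b1
    have : B = 0 := le_antisymm (by simpa using b1) hB0
    rw [this]; simp
  have hE0 : (0 : ℝ) < E := by
    have : 0 < (P * m) ^ 2 := by positivity
    by_contra hcon
    have : (T : ℝ) * E ≤ 0 := mul_nonpos_of_nonneg_of_nonpos hT0 (not_lt.1 hcon)
    linarith
  have hBE : B * E ≤ 1040 * (T * E) := by
    calc B * E ≤ B * (P * m + 2 * ((N : ℝ) ^ 2 / p + 1) * m ^ 2) :=
          mul_le_mul_of_nonneg_left hE hB0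
      _ = B * (P * m) + 2 * (B * ((N : ℝ) ^ 2 / p)) * m ^ 2 + 2 * B * m ^ 2 := by ring
      _ ≤ (16 * P * m) * (P * m) + 2 * (256 * P ^ 2) * m ^ 2 + 2 * (256 * P ^ 2) * m ^ 2 := by
          gcongr
      _ = 1040 * (P * m) ^ 2 := by ring
      _ ≤ 1040 * (T * E) := by linarith
  have : B ≤ 1040 * T := by
    rw [← mul_assoc] at hBE
    exact le_of_mul_le_mul_right hBE hE0
  linarith
end

section
/- Let $p$ be a prime, $L, N$ integers with $0 < L < L + N < p$, and $\ell$ a fixed positive integer. The number $J_\ell(L, N)$ of solutions of $\sum_{i=1}^{\ell} n_i! \equiv \sum_{i=\ell+1}^{2\ell} n_i! \pmod p$ with $L+1 \le n_1, \ldots, n_{2\ell} \le L+N$ satisfies $J_\ell(L, N) \ll N^{2\ell - 1 + 1/(\ell+1)}$, with implied constant depending only on $\ell$. -/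
open Finset

noncomputable def EE (ℓ p : ℕ) (f : ℕ → ZMod p) (A : Finset ℕ) : ℕ :=
  (((Fintype.piFinset fun _ : Fin ℓ => A) ×ˢ (Fintype.piFinset fun _ : Fin ℓ => A)).filter
    (fun t : (Fin ℓ → ℕ) × (Fin ℓ → ℕ) => ∑ i, f (t.1 i) = ∑ i, f (t.2 i))).card

lemma EE_moment (ℓ p : ℕ) [Fact p.Prime] (f : ℕ → ZMod p) (A : Finset ℕ) :
    (p : ℝ) * (EE ℓ p f A : ℝ) =
      ∑ a : ZMod p, ‖∑ n ∈ A, ZMod.stdAddChar (N := p) (a * f n)‖ ^ (2 * ℓ) := by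
  have key : ∀ a : ZMod p, ((‖∑ n ∈ A, ZMod.stdAddChar (N := p) (a * f n)‖ ^ (2 * ℓ) : ℝ) : ℂ)
      = ∑ t ∈ (Fintype.piFinset fun _ : Fin ℓ => A) ×ˢ (Fintype.piFinset fun _ : Fin ℓ => A),
        ZMod.stdAddChar (N := p) (a * (∑ i, f (t.1 i) - ∑ i, f (t.2 i))) := by
    intro a
    have hp : ∀ (g : ℕ → ℂ), (∑ n ∈ A, g n) ^ ℓ =
        ∑ x ∈ Fintype.piFinset fun _ : Fin ℓ => A, ∏ i, g (x i) := by
      intro g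
      rw [← Finset.prod_univ_sum (fun _ : Fin ℓ => A) (fun _ n => g n)]
      simp
    have : ((‖∑ n ∈ A, ZMod.stdAddChar (N := p) (a * f n)‖ ^ (2 * ℓ) : ℝ) : ℂ)
        = (∑ n ∈ A, ZMod.stdAddChar (N := p) (a * f n)) ^ ℓ *
          (∑ n ∈ A, ZMod.stdAddChar (N := p) (-(a * f n))) ^ ℓ := by
      rw [← mul_pow, pow_mul]
      push_cast
      rw [← Complex.mul_conj', map_sum]
      simp only [AddChar.map_neg_eq_conj]
    have hs : ∀ g : Fin ℓ → ZMod p, ZMod.stdAddChar (N := p) (∑ i, g i) =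
        ∏ i, ZMod.stdAddChar (N := p) (g i) := by
      intro g
      induction (Finset.univ : Finset (Fin ℓ)) using Finset.induction_on with
      | empty => simp
      | insert i s hi ih => rw [Finset.sum_insert hi, Finset.prod_insert hi, AddChar.map_add_eq_mul, ih]
    rw [this, hp, hp, Finset.sum_mul_sum, Finset.sum_product]
    refine Finset.sum_congr rfl fun x _ => Finset.sum_congr rfl fun y _ => ?_
    rw [mul_sub, sub_eq_add_neg, AddChar.map_add_eq_mul, Finset.mul_sum, Finset.mul_sum,
      ← Finset.sum_neg_distrib, hs, hs]
  have : ((p : ℂ) * (EE ℓ p f A : ℂ)) =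
      ∑ a : ZMod p, ((‖∑ n ∈ A, ZMod.stdAddChar (N := p) (a * f n)‖ ^ (2 * ℓ) : ℝ) : ℂ) := by
    rw [Finset.sum_congr rfl (fun a _ => key a), Finset.sum_comm]
    simp only [AddChar.sum_mulShift _ (ZMod.isPrimitive_stdAddChar p)]
    unfold EE
    rw [Finset.card_filter, Nat.cast_sum, Finset.mul_sum]
    refine Finset.sum_congr rfl fun x _ => ?_
    by_cases h : ∑ i, f (x.1 i) = ∑ i, f (x.2 i) <;> simp [h, sub_eq_zero, ZMod.card]
  exact_mod_cast this

lemma EE_holder (ℓ p : ℕ) (hℓ : 1 ≤ ℓ) [Fact p.Prime] (f : ℕ → ZMod p) (I T : Finset ℕ)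
    (A : ℕ → Finset ℕ) (K : ℕ) (hA : ∀ j ∈ T, A j ⊆ I)
    (hK : ∀ n ∈ I, (T.filter (fun j => n ∈ A j)).card = K) :
    (K : ℝ) ^ (2 * ℓ) * EE ℓ p f I ≤ (T.card : ℝ) ^ (2 * ℓ - 1) * ∑ j ∈ T, (EE ℓ p f (A j) : ℝ) := by
  have hp : (0 : ℝ) < p := by exact_mod_cast (Fact.out : p.Prime).pos
  refine le_of_mul_le_mul_left ?_ hp
  have e1 : (p : ℝ) * ((K : ℝ) ^ (2 * ℓ) * EE ℓ p f I) = (K : ℝ) ^ (2 * ℓ) * (p * EE ℓ p f I) := by ring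
  have e2 : (p : ℝ) * ((T.card : ℝ) ^ (2 * ℓ - 1) * ∑ j ∈ T, (EE ℓ p f (A j) : ℝ)) =
    (T.card : ℝ) ^ (2 * ℓ - 1) * ∑ j ∈ T, (p * EE ℓ p f (A j) : ℝ) := by
    rw [← Finset.mul_sum]; ring
  rw [e1, e2, EE_moment]
  simp only [EE_moment]
  rw [Finset.sum_comm, Finset.mul_sum, Finset.mul_sum]
  refine Finset.sum_le_sum fun a _ => ?_
  have h1 : (K : ℂ) * ∑ n ∈ I, ZMod.stdAddChar (N := p) (a * f n) =
      ∑ j ∈ T, ∑ n ∈ A j, ZMod.stdAddChar (N := p) (a * f n) := by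
    have : ∀ j ∈ T, ∑ n ∈ A j, ZMod.stdAddChar (N := p) (a * f n) =
        ∑ n ∈ I, if n ∈ A j then ZMod.stdAddChar (N := p) (a * f n) else 0 := by
      intro j hj
      rw [← Finset.sum_filter]
      congr 1
      ext n
      simp only [Finset.mem_filter]
      exact ⟨fun h => ⟨hA j hj h, h⟩, fun h => h.2⟩
    rw [Finset.sum_congr rfl this, Finset.sum_comm, Finset.mul_sum]
    refine Finset.sum_congr rfl fun n hn => ?_
    rw [← Finset.sum_filter, Finset.sum_const, hK n hn, nsmul_eq_mul]
  have h2 : (K : ℝ) * ‖∑ n ∈ I, ZMod.stdAddChar (N := p) (a * f n)‖ ≤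
      ∑ j ∈ T, ‖∑ n ∈ A j, ZMod.stdAddChar (N := p) (a * f n)‖ := by
    have := congrArg norm h1
    rw [norm_mul, Complex.norm_natCast] at this
    rw [this]
    exact norm_sum_le _ _
  rw [← mul_pow]
  refine (pow_le_pow_left₀ (by positivity) h2 _).trans ?_
  obtain ⟨m, hm⟩ : ∃ m, 2 * ℓ = m + 1 := ⟨2 * ℓ - 1, by omega⟩
  rw [hm, Nat.add_sub_cancel]
  exact pow_sum_le_card_mul_sum_pow (fun _ _ => norm_nonneg _) _

lemma asc_rigid (ℓ p : ℕ) [Fact p.Prime] (hp : ℓ < p) (u v : Fin ℓ → ℕ)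
    (h : ∑ i, ascPochhammer (ZMod p) (u i) = ∑ i, ascPochhammer (ZMod p) (v i)) :
    ∀ i, ∃ k, u k = v i := by
  let S : Polynomial.Sequence (ZMod p) :=
    ⟨fun k => ascPochhammer (ZMod p) k, fun k => by
      rw [Polynomial.degree_eq_natDegree (monic_ascPochhammer (ZMod p) k).ne_zero,
        ascPochhammer_natDegree]⟩
  have hli := S.linearIndependent
  have hS : ∀ w : Fin ℓ → ℕ, Finsupp.linearCombination (ZMod p) (fun k => S k)
      (∑ i, Finsupp.single (w i) (1 : ZMod p)) = ∑ i, ascPochhammer (ZMod p) (w i) := by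
    intro w
    rw [map_sum]
    refine Finset.sum_congr rfl fun i _ => ?_
    rw [Finsupp.linearCombination_single, one_smul]
  have heq : (∑ i, Finsupp.single (u i) (1 : ZMod p)) = ∑ i, Finsupp.single (v i) (1 : ZMod p) := by
    apply hli
    rw [hS, hS, h]
  intro i
  by_contra! hne
  have h2 := DFunLike.congr_fun heq (v i)
  rw [Finsupp.finset_sum_apply, Finsupp.finset_sum_apply] at h2
  have h3 : ∑ k, (Finsupp.single (u k) (1 : ZMod p)) (v i) = 0 :=
    Finset.sum_eq_zero fun k _ => by rw [Finsupp.single_apply, if_neg (hne k)]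
  rw [h3] at h2
  simp only [Finsupp.single_apply] at h2
  rw [Finset.sum_boole] at h2
  have h4 := (ZMod.natCast_eq_zero_iff _ _).1 h2.symm
  have h5 : 0 < (Finset.univ.filter (fun k => v k = v i)).card :=
    Finset.card_pos.2 ⟨i, by simp⟩
  have h6 : (Finset.univ.filter (fun k => v k = v i)).card ≤ ℓ := by
    simpa using Finset.card_le_univ (Finset.univ.filter (fun k => v k = v i))
  have := Nat.le_of_dvd h5 h4
  omega

/-- tuples with entries below `K` -/
def UU (ℓ K : ℕ) : Finset ((Fin ℓ → ℕ) × (Fin ℓ → ℕ)) :=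
  (Fintype.piFinset fun _ : Fin ℓ => Finset.range K) ×ˢ
    (Fintype.piFinset fun _ : Fin ℓ => Finset.range K)

noncomputable def PP (ℓ p : ℕ) (w : (Fin ℓ → ℕ) × (Fin ℓ → ℕ)) : Polynomial (ZMod p) :=
  ∑ i, ascPochhammer (ZMod p) (w.1 i) - ∑ i, ascPochhammer (ZMod p) (w.2 i)

lemma card_UU (ℓ K : ℕ) : (UU ℓ K).card = K ^ (2 * ℓ) := by
  simp [UU, Fintype.card_piFinset, two_mul, pow_add]

lemma card_trivial (ℓ p K : ℕ) [Fact p.Prime] (hp : ℓ < p) :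
    ((UU ℓ K).filter (fun w => PP ℓ p w = 0)).card ≤ ℓ ^ ℓ * K ^ ℓ := by
  have : ((UU ℓ K).filter (fun w => PP ℓ p w = 0)) ⊆
      ((Finset.univ : Finset (Fin ℓ → Fin ℓ)) ×ˢ
        (Fintype.piFinset fun _ : Fin ℓ => Finset.range K)).image
        (fun x => (x.2, fun i => x.2 (x.1 i))) := by
    rintro ⟨u, v⟩ hw
    simp only [Finset.mem_filter, UU, Finset.mem_product, PP, sub_eq_zero] at hw
    choose σ hσ using asc_rigid ℓ p hp u v hw.2
    refine Finset.mem_image.2 ⟨(σ, u), ?_, ?_⟩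
    · simp only [Finset.mem_product, Finset.mem_univ, true_and]
      exact hw.1.1
    · simp only [Prod.mk.injEq, true_and]
      funext i
      exact hσ i
  refine (Finset.card_le_card this).trans (Finset.card_image_le.trans ?_)
  simp [Fintype.card_piFinset]

lemma card_roots (ℓ p K : ℕ) [Fact p.Prime] (w : (Fin ℓ → ℕ) × (Fin ℓ → ℕ)) (hw : w ∈ UU ℓ K)
    (h0 : PP ℓ p w ≠ 0) (T : Finset ℕ) (hT : ∀ j ∈ T, K ≤ j ∧ j - K < p) :
    (T.filter (fun j => (PP ℓ p w).eval (((j - K + 1 : ℕ) : ZMod p)) = 0)).card ≤ K := by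
  classical
  have hdeg : (PP ℓ p w).natDegree ≤ K := by
    simp only [UU, Finset.mem_product, Fintype.mem_piFinset, Finset.mem_range] at hw
    refine (Polynomial.natDegree_sub_le _ _).trans (max_le ?_ ?_)
    · refine Polynomial.natDegree_sum_le_of_forall_le _ _ fun i _ => ?_
      rw [ascPochhammer_natDegree]; exact (hw.1 i).le
    · refine Polynomial.natDegree_sum_le_of_forall_le _ _ fun i _ => ?_
      rw [ascPochhammer_natDegree]; exact (hw.2 i).le
  refine le_trans ?_ ((Polynomial.card_roots' _).trans hdeg)
  refine le_trans ?_ (Multiset.toFinset_card_le _)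
  refine Finset.card_le_card_of_injOn (fun j => ((j - K + 1 : ℕ) : ZMod p)) ?_ ?_
  · intro j hj
    have hj := (Finset.mem_filter.1 hj).2
    simp [h0, Polynomial.IsRoot]
    simpa using hj
  · intro a ha b hb hab
    have ha := hT a (Finset.mem_filter.1 ha).1
    have hb := hT b (Finset.mem_filter.1 hb).1
    simp only [Nat.cast_add, add_left_inj] at hab
    rw [ZMod.natCast_eq_natCast_iff', Nat.mod_eq_of_lt ha.2, Nat.mod_eq_of_lt hb.2] at hab
    omega

lemma EE_le (ℓ p K j : ℕ) [Fact p.Prime] (A : Finset ℕ) (hKj : K ≤ j) (hj : j - K < p)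
    (hA : ∀ n ∈ A, n < j ∧ j ≤ n + K) :
    EE ℓ p (fun n => (Nat.factorial n : ZMod p)) A ≤
      ((UU ℓ K).filter (fun w => (PP ℓ p w).eval (((j - K + 1 : ℕ) : ZMod p)) = 0)).card := by
  unfold EE
  have hf : ((Nat.factorial (j - K) : ℕ) : ZMod p) ≠ 0 := by
    rw [Ne, ZMod.natCast_eq_zero_iff, (Fact.out : p.Prime).dvd_factorial]
    omega
  have key : ∀ n ∈ A, (Nat.factorial n : ZMod p) = (Nat.factorial (j - K) : ℕ) *
      (ascPochhammer (ZMod p) (n - (j - K))).eval (((j - K + 1 : ℕ) : ZMod p)) := by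
    intro n hn
    rw [ascPochhammer_nat_eq_natCast_ascFactorial, ← Nat.cast_mul, Nat.factorial_mul_ascFactorial]
    have := hA n hn
    congr 2
    omega
  refine Finset.card_le_card_of_injOn
    (fun t => (fun i => t.1 i - (j - K), fun i => t.2 i - (j - K))) ?_ ?_
  · rintro ⟨t, s⟩ ht
    simp only [Finset.coe_filter, Finset.mem_product, Fintype.mem_piFinset, Set.mem_setOf_eq] at ht
    obtain ⟨⟨h1, h2⟩, h3⟩ := ht
    simp only [Finset.coe_filter, Set.mem_setOf_eq, UU, Finset.mem_product, Fintype.mem_piFinset,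
      Finset.mem_range, PP, Polynomial.eval_sub, Polynomial.eval_finset_sum]
    refine ⟨⟨fun i => ?_, fun i => ?_⟩, ?_⟩
    · have := hA _ (h1 i); omega
    · have := hA _ (h2 i); omega
    · rw [sub_eq_zero]
      apply mul_left_cancel₀ hf
      rw [Finset.mul_sum, Finset.mul_sum]
      rw [Finset.sum_congr rfl (fun i _ => key _ (h1 i)),
        Finset.sum_congr rfl (fun i _ => key _ (h2 i))] at h3
      exact h3
  · rintro ⟨t, s⟩ ht ⟨t', s'⟩ ht' heq
    simp only [Finset.coe_filter, Finset.mem_product, Fintype.mem_piFinset, Set.mem_setOf_eq] at ht ht'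
    simp only [Prod.mk.injEq] at heq ⊢
    constructor
    · funext i
      have e := congrFun heq.1 i
      have a := hA _ (ht.1.1 i)
      have b := hA _ (ht'.1.1 i)
      omega
    · funext i
      have e := congrFun heq.2 i
      have a := hA _ (ht.1.2 i)
      have b := hA _ (ht'.1.2 i)
      omega

lemma EE_triv (ℓ p : ℕ) (f : ℕ → ZMod p) (A : Finset ℕ) : EE ℓ p f A ≤ A.card ^ (2 * ℓ) := by
  unfold EE
  refine (Finset.card_filter_le _ _).trans ?_
  simp [Fintype.card_piFinset, two_mul, pow_add]

lemma EE_sum (ℓ p K : ℕ) [Fact p.Prime] (hp : ℓ < p) (T : Finset ℕ) (A : ℕ → Finset ℕ)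
    (hT : ∀ j ∈ T, j - K < p) (hA : ∀ j ∈ T, ∀ n ∈ A j, n < j ∧ j ≤ n + K) :
    ∑ j ∈ T, EE ℓ p (fun n => (Nat.factorial n : ZMod p)) (A j) ≤
      K * K ^ (2 * ℓ) + (K ^ (2 * ℓ) * K + ℓ ^ ℓ * K ^ ℓ * T.card) := by
  classical
  rw [← Finset.sum_filter_add_sum_filter_not T (fun j => j < K)]
  refine add_le_add ?_ ?_
  · have : ∀ j ∈ T.filter (fun j => j < K),
        EE ℓ p (fun n => (Nat.factorial n : ZMod p)) (A j) ≤ K ^ (2 * ℓ) := by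
      intro j hj
      obtain ⟨hj1, hj2⟩ := Finset.mem_filter.1 hj
      refine (EE_triv _ _ _ _).trans (Nat.pow_le_pow_left ?_ _)
      have : A j ⊆ Finset.range K := fun n hn => by
        have := hA j hj1 n hn
        simp only [Finset.mem_range]; omega
      simpa using Finset.card_le_card this
    refine (Finset.sum_le_card_nsmul _ _ _ this).trans ?_
    rw [smul_eq_mul]
    refine Nat.mul_le_mul_right _ ?_
    have : T.filter (fun j => j < K) ⊆ Finset.range K := fun j hj => by
      simpa using (Finset.mem_filter.1 hj).2
    simpa using Finset.card_le_card this
  · set T' := T.filter (fun j => ¬ j < K) with hT'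
    have hT'2 : ∀ j ∈ T', K ≤ j ∧ j - K < p := fun j hj => by
      obtain ⟨hj1, hj2⟩ := Finset.mem_filter.1 hj
      exact ⟨by omega, hT j hj1⟩
    calc _ ≤ ∑ j ∈ T', ((UU ℓ K).filter
            (fun w => (PP ℓ p w).eval (((j - K + 1 : ℕ) : ZMod p)) = 0)).card :=
          Finset.sum_le_sum fun j hj => EE_le ℓ p K j (A j) (hT'2 j hj).1 (hT'2 j hj).2
            (hA j (Finset.mem_filter.1 hj).1)
      _ = ∑ w ∈ UU ℓ K, (T'.filter
            (fun j => (PP ℓ p w).eval (((j - K + 1 : ℕ) : ZMod p)) = 0)).card := by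
          simp only [Finset.card_filter]
          rw [Finset.sum_comm]
      _ ≤ ∑ w ∈ UU ℓ K, (K + if PP ℓ p w = 0 then T.card else 0) := by
          refine Finset.sum_le_sum fun w hw => ?_
          by_cases h0 : PP ℓ p w = 0
          · rw [if_pos h0]
            exact ((Finset.card_filter_le _ _).trans (Finset.card_filter_le _ _)).trans
              (Nat.le_add_left _ _)
          · rw [if_neg h0]
            exact card_roots ℓ p K w hw h0 T' hT'2
      _ = K ^ (2 * ℓ) * K + ((UU ℓ K).filter (fun w => PP ℓ p w = 0)).card * T.card := by
          rw [Finset.sum_add_distrib, ← Finset.sum_filter, Finset.sum_const, Finset.sum_const,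
            card_UU, smul_eq_mul, smul_eq_mul]
      _ ≤ _ := by
          have := card_trivial ℓ p K hp
          gcongr

lemma main_bound (ℓ p L N K : ℕ) (hℓ : 1 ≤ ℓ) [Fact p.Prime] (hp : ℓ < p) (hL : L + N < p)
    (hK1 : 1 ≤ K) (hKN : K ≤ N) :
    (K : ℝ) ^ (2 * ℓ) * EE ℓ p (fun n => (Nat.factorial n : ZMod p)) (Finset.Icc (L + 1) (L + N)) ≤
      (2 * N : ℝ) ^ (2 * ℓ - 1) *
        (2 * K ^ (2 * ℓ + 1) + (ℓ : ℝ) ^ ℓ * K ^ ℓ * (2 * N)) := by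
  set T := Finset.Icc (L + 2) (L + N + K) with hT
  let A : ℕ → Finset ℕ := fun j => (Finset.Icc (L + 1) (L + N)).filter (fun n => n < j ∧ j ≤ n + K)
  have hTc : T.card ≤ 2 * N := by
    rw [hT, Nat.card_Icc]; omega
  have h1 := EE_holder ℓ p hℓ (fun n => (Nat.factorial n : ZMod p)) (Finset.Icc (L + 1) (L + N))
    T A K (fun j _ => Finset.filter_subset _ _) (by
      intro n hn
      have : T.filter (fun j => n ∈ A j) = Finset.Ioc n (n + K) := by
        ext j
        simp only [hT, A, Finset.mem_filter, Finset.mem_Icc, Finset.mem_Ioc] at hn ⊢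
        omega
      rw [this, Nat.card_Ioc]; omega)
  have h2 := EE_sum ℓ p K hp T A (by
      intro j hj
      simp only [hT, Finset.mem_Icc] at hj
      omega) (by
      intro j _ n hn
      exact (Finset.mem_filter.1 hn).2)
  have h3 : (∑ j ∈ T, (EE ℓ p (fun n => (Nat.factorial n : ZMod p)) (A j) : ℝ)) ≤
      K * K ^ (2 * ℓ) + (K ^ (2 * ℓ) * K + ℓ ^ ℓ * K ^ ℓ * T.card) := by exact_mod_cast h2
  have hTc' : (T.card : ℝ) ≤ 2 * N := by exact_mod_cast hTc
  refine h1.trans ?_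
  refine mul_le_mul (pow_le_pow_left₀ (by positivity) hTc' _) (h3.trans ?_)
    (Finset.sum_nonneg fun _ _ => Nat.cast_nonneg _) (by positivity)
  have : (ℓ : ℝ) ^ ℓ * K ^ ℓ * T.card ≤ (ℓ : ℝ) ^ ℓ * K ^ ℓ * (2 * N) := by gcongr
  rw [pow_succ]
  linarith

theorem stmt_11 (ℓ : ℕ) (hℓ : 1 ≤ ℓ) :
    ∃ C : ℝ, 0 < C ∧ ∀ (p L N : ℕ), p.Prime → 0 < L → L + N < p →
      ((((Fintype.piFinset fun _ : Fin ℓ => Finset.Icc (L + 1) (L + N)) ×ˢ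
          (Fintype.piFinset fun _ : Fin ℓ => Finset.Icc (L + 1) (L + N))).filter
          (fun t : (Fin ℓ → ℕ) × (Fin ℓ → ℕ) =>
            ∑ i, (Nat.factorial (t.1 i) : ZMod p) = ∑ i, (Nat.factorial (t.2 i) : ZMod p))).card : ℝ)
        ≤ C * (N : ℝ) ^ (2 * (ℓ : ℝ) - 1 + 1 / ((ℓ : ℝ) + 1)) := by
  refine ⟨2 ^ (2 * ℓ - 1) * (4 + 2 * (ℓ : ℝ) ^ ℓ) + ℓ, by positivity, ?_⟩
  intro p L N hp _ hLN
  haveI : Fact p.Prime := ⟨hp⟩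
  change (EE ℓ p (fun n => (Nat.factorial n : ZMod p)) (Finset.Icc (L + 1) (L + N)) : ℝ) ≤ _
  set E := EE ℓ p (fun n => (Nat.factorial n : ZMod p)) (Finset.Icc (L + 1) (L + N)) with hE
  have htriv : E ≤ N ^ (2 * ℓ) := by
    have := EE_triv ℓ p (fun n => (Nat.factorial n : ZMod p)) (Finset.Icc (L + 1) (L + N))
    rw [Nat.card_Icc] at this
    have e : L + N + 1 - (L + 1) = N := by omega
    rwa [e] at this
  rcases Nat.eq_zero_or_pos N with rfl | hN
  · rw [zero_pow (by omega)] at htriv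
    have : E = 0 := by omega
    rw [this, Nat.cast_zero]
    positivity
  have hN' : (1 : ℝ) ≤ N := by exact_mod_cast hN
  have hN0 : (0 : ℝ) < N := by linarith
  set x : ℝ := (N : ℝ) ^ (1 / ((ℓ : ℝ) + 1)) with hx
  have hx1 : 1 ≤ x := Real.one_le_rpow hN' (by positivity)
  have hxN : x ^ (ℓ + 1) = N := by
    rw [hx, ← Real.rpow_natCast, ← Real.rpow_mul hN0.le]
    push_cast
    rw [one_div, inv_mul_cancel₀ (by positivity), Real.rpow_one]
  have hrp : (N : ℝ) ^ (2 * (ℓ : ℝ) - 1 + 1 / ((ℓ : ℝ) + 1)) = N ^ (2 * ℓ - 1) * x := by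
    rw [Real.rpow_add hN0, ← Real.rpow_natCast, Nat.cast_sub (by omega)]
    push_cast
    rfl
  rw [hrp, add_mul]
  have hsplit : (N : ℝ) ^ (2 * ℓ) = N ^ (2 * ℓ - 1) * N := by
    rw [← pow_succ]; congr 1; omega
  have hpos : (0 : ℝ) ≤ (N : ℝ) ^ (2 * ℓ - 1) * x := by positivity
  rcases Nat.lt_or_ge ℓ p with hlp | hlp
  · have hgoal : (E : ℝ) ≤ 2 ^ (2 * ℓ - 1) * (4 + 2 * (ℓ : ℝ) ^ ℓ) * ((N : ℝ) ^ (2 * ℓ - 1) * x) := by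
      set K := ⌈x⌉₊ with hK
      have hxK : x ≤ K := Nat.le_ceil x
      have hK2 : (K : ℝ) ≤ 2 * x := by
        have := (Nat.ceil_lt_add_one (show 0 ≤ x by linarith)).le
        linarith
      have hK1 : 1 ≤ K := by
        have : (1 : ℝ) ≤ K := hx1.trans hxK
        exact_mod_cast this
      have hKN : K ≤ N := by
        refine Nat.ceil_le.2 ?_
        rw [← hxN]
        exact le_self_pow₀ hx1 (by omega)
      have hb := main_bound ℓ p L N K hℓ hlp hLN hK1 hKN
      rw [← hE] at hb
      have hK0 : (0 : ℝ) < K := by exact_mod_cast hK1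
      have hNK : (N : ℝ) ≤ K ^ ℓ * x := by
        rw [← hxN, pow_succ]
        gcongr
      have h2 : 2 * (K : ℝ) ^ (2 * ℓ + 1) + (ℓ : ℝ) ^ ℓ * K ^ ℓ * (2 * N) ≤
          (K : ℝ) ^ (2 * ℓ) * ((4 + 2 * (ℓ : ℝ) ^ ℓ) * x) := by
        have a1 : (K : ℝ) ^ (2 * ℓ + 1) ≤ K ^ (2 * ℓ) * (2 * x) := by
          rw [pow_succ]; gcongr
        have a2 : (ℓ : ℝ) ^ ℓ * K ^ ℓ * (2 * N) ≤ (ℓ : ℝ) ^ ℓ * K ^ ℓ * (2 * (K ^ ℓ * x)) := by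
          gcongr
        have a3 : (K : ℝ) ^ (2 * ℓ) = K ^ ℓ * K ^ ℓ := by rw [two_mul, pow_add]
        rw [a3] at a1 ⊢
        nlinarith [a1, a2]
      refine le_of_mul_le_mul_left (hb.trans ((mul_le_mul_of_nonneg_left h2 (by positivity)).trans
        (le_of_eq ?_))) (show (0 : ℝ) < (K : ℝ) ^ (2 * ℓ) by positivity)
      rw [mul_pow]
      ring
    have : 0 ≤ (ℓ : ℝ) * ((N : ℝ) ^ (2 * ℓ - 1) * x) := by positivity
    linarith
  · have hNl : (N : ℝ) ≤ ℓ := by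
      have : N ≤ ℓ := by omega
      exact_mod_cast this
    have h1 : (E : ℝ) ≤ (N : ℝ) ^ (2 * ℓ) := by exact_mod_cast htriv
    have h2 : (N : ℝ) ^ (2 * ℓ) ≤ ℓ * ((N : ℝ) ^ (2 * ℓ - 1) * x) := by
      rw [hsplit]
      calc (N : ℝ) ^ (2 * ℓ - 1) * N ≤ (N : ℝ) ^ (2 * ℓ - 1) * (ℓ * x) := by
            gcongr
            nlinarith
        _ = _ := by ring
    have : 0 ≤ 2 ^ (2 * ℓ - 1) * (4 + 2 * (ℓ : ℝ) ^ ℓ) * ((N : ℝ) ^ (2 * ℓ - 1) * x) := by positivity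
    linarith
end

section
/- Let $p$ be a large prime. Every residue class $\lambda$ modulo $p$ can be represented as $m!\, n! + \sum_{i=1}^{47} n_i! \equiv \lambda \pmod p$ for some positive integers $m, n, n_1, \ldots, n_{47}$ with $\max\{m, n, n_1, \ldots, n_{47}\} \ll p^{1300/1301}$. -/
open Finset Polynomial

namespace FactRep

noncomputable def e {p : ℕ} [NeZero p] (x : ZMod p) : ℂ := ZMod.stdAddChar x

lemma e_norm {p : ℕ} [NeZero p] (x : ZMod p) : ‖e x‖ = 1 := AddChar.norm_apply _ _

lemma e_zero {p : ℕ} [NeZero p] : e (0 : ZMod p) = 1 := AddChar.map_zero_eq_one _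

lemma e_add {p : ℕ} [NeZero p] (x y : ZMod p) : e (x + y) = e x * e y :=
  AddChar.map_add_eq_mul _ _ _

lemma e_conj {p : ℕ} [NeZero p] (x : ZMod p) : (starRingEnd ℂ) (e x) = e (-x) :=
  (AddChar.map_neg_eq_conj _ _).symm

lemma e_sum {p : ℕ} [NeZero p] {ι : Type*} (s : Finset ι) (f : ι → ZMod p) :
    e (∑ i ∈ s, f i) = ∏ i ∈ s, e (f i) := by
  classical
  induction s using Finset.induction_on with
  | empty => simp [e_zero]
  | insert a s ha ih => rw [sum_insert ha, prod_insert ha, e_add, ih]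

lemma orth {p : ℕ} [Fact p.Prime] (b : ZMod p) :
    ∑ a : ZMod p, e (a * b) = if b = 0 then (p : ℂ) else 0 := by
  have := AddChar.sum_mulShift (R := ZMod p) b (ZMod.isPrimitive_stdAddChar p)
  simpa [e, ZMod.card] using this

lemma moment {p : ℕ} [Fact p.Prime] {ι : Type*} [Fintype ι] [DecidableEq ι]
    (g : ι → ZMod p) (l : ℕ) :
    ∑ a : ZMod p, ‖∑ i, e (a * g i)‖ ^ (2 * l) =
      p * ((univ.filter fun q : (Fin l → ι) × (Fin l → ι) =>
        ∑ i, g (q.1 i) = ∑ i, g (q.2 i)).card : ℝ) := by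
  have key : ∀ a : ZMod p, ((‖∑ i, e (a * g i)‖ ^ (2 * l) : ℝ) : ℂ) =
      ∑ q : (Fin l → ι) × (Fin l → ι), e (a * (∑ i, g (q.1 i) - ∑ i, g (q.2 i))) := by
    intro a
    rw [pow_mul]
    push_cast
    rw [← Complex.mul_conj', mul_pow, map_sum, Fintype.sum_pow, Fintype.sum_pow,
      Fintype.sum_mul_sum, Fintype.sum_prod_type]
    refine sum_congr rfl fun u _ => sum_congr rfl fun v _ => ?_
    rw [mul_sub, sub_eq_add_neg, e_add, mul_sum, mul_sum, e_sum, ← sum_neg_distrib, e_sum]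
    simp only [e_conj]
  have : ((∑ a : ZMod p, ‖∑ i, e (a * g i)‖ ^ (2 * l) : ℝ) : ℂ) =
      ((p * ((univ.filter fun q : (Fin l → ι) × (Fin l → ι) =>
        ∑ i, g (q.1 i) = ∑ i, g (q.2 i)).card : ℝ) : ℝ) : ℂ) := by
    rw [Complex.ofReal_sum, sum_congr rfl fun a _ => key a, sum_comm]
    simp only [orth, sub_eq_zero]
    rw [← sum_filter, sum_const, nsmul_eq_mul]
    push_cast
    ring
  exact_mod_cast this

/-- the polynomials -/
noncomputable def seqP (p : ℕ) [Fact p.Prime] : Polynomial.Sequence (ZMod p) where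
  elems' j := ascPochhammer (ZMod p) j
  degree_eq' j := by
    rw [Polynomial.degree_eq_natDegree (monic_ascPochhammer (ZMod p) j).ne_zero,
      ascPochhammer_natDegree]

lemma fac_eq (p : ℕ) [Fact p.Prime] (n j : ℕ) :
    ((n + 1 + j).factorial : ZMod p) =
      ((n + 1).factorial : ZMod p) * (ascPochhammer (ZMod p) j).eval ((n + 2 : ℕ) : ZMod p) := by
  rw [← Nat.factorial_mul_ascFactorial, Nat.cast_mul, Nat.cast_ascFactorial]

lemma fac_ne {p : ℕ} [hp : Fact p.Prime] {n : ℕ} (h : n < p) : (n.factorial : ZMod p) ≠ 0 := by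
  rw [Ne, ZMod.natCast_eq_zero_iff, hp.out.dvd_factorial]
  omega

lemma roots_count {p : ℕ} [hp : Fact p.Prime] {N K : ℕ} (hN : N + 1 < p) (F : (ZMod p)[X])
    (hF : F ≠ 0) (hd : F.natDegree ≤ K) :
    (univ.filter fun n : Fin N => F.eval (((n : ℕ) + 2 : ℕ) : ZMod p) = 0).card ≤ K := by
  classical
  refine le_trans ?_ ((Multiset.toFinset_card_le _).trans ((Polynomial.card_roots' F).trans hd))
  refine card_le_card_of_injOn (fun n : Fin N => (((n : ℕ) + 2 : ℕ) : ZMod p)) ?_ ?_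
  · intro n hn
    simp only [coe_filter, mem_univ, true_and, Set.mem_ofPred_eq] at hn
    simp only [mem_coe, Multiset.mem_toFinset]
    rw [Polynomial.mem_roots hF]
    exact hn
  · intro a _ b _ hab
    simp only at hab
    have := (ZMod.natCast_eq_natCast_iff' _ _ _).1 hab
    rw [Nat.mod_eq_of_lt (by omega), Nat.mod_eq_of_lt (by omega)] at this
    ext; omega

noncomputable def FF (p : ℕ) [Fact p.Prime] {K l : ℕ} (q : (Fin l → Fin K) × (Fin l → Fin K)) :
    (ZMod p)[X] :=
  ∑ i, ascPochhammer (ZMod p) (q.1 i) - ∑ i, ascPochhammer (ZMod p) (q.2 i)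

lemma FF_deg {p : ℕ} [Fact p.Prime] {K l : ℕ} (q : (Fin l → Fin K) × (Fin l → Fin K)) :
    (FF p q).natDegree ≤ K := by
  refine (Polynomial.natDegree_sub_le _ _).trans (max_le ?_ ?_)
  all_goals
    refine Polynomial.natDegree_sum_le_of_forall_le _ _ fun i _ => ?_
    rw [ascPochhammer_natDegree]
    exact (Fin.is_lt _).le

lemma FF_zero {p : ℕ} [Fact p.Prime] {K l : ℕ} (hl : l < p)
    (q : (Fin l → Fin K) × (Fin l → Fin K)) (h : FF p q = 0) (i : Fin l) :
    ∃ i', q.2 i' = q.1 i := by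
  classical
  by_contra! hne
  have hLI := (seqP p).linearIndependent
  rw [linearIndependent_iff] at hLI
  let c : ℕ →₀ ZMod p := ∑ i, Finsupp.single (q.1 i : ℕ) 1 - ∑ i, Finsupp.single (q.2 i : ℕ) 1
  have hc : c = 0 := by
    apply hLI
    simp only [c, map_sub, map_sum, Finsupp.linearCombination_single, one_smul]
    exact h
  have h1 := DFunLike.congr_fun hc (q.1 i : ℕ)
  simp only [c, Finsupp.coe_sub, Pi.sub_apply, Finsupp.finsetSum_apply, Finsupp.single_apply,
    Finsupp.coe_zero, Pi.zero_apply, Fin.val_inj, hne, if_false, sum_const_zero, sub_zero] at h1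
  rw [← sum_filter, sum_const, nsmul_eq_mul, mul_one, ZMod.natCast_eq_zero_iff] at h1
  have h2 : (univ.filter fun x => q.1 x = q.1 i).card ≤ l := by
    simpa using card_filter_le (univ : Finset (Fin l)) (fun x => q.1 x = q.1 i)
  have h3 : 0 < (univ.filter fun x => q.1 x = q.1 i).card := card_pos.2 ⟨i, by simp⟩
  have := Nat.le_of_dvd h3 h1
  omega

lemma FF_card {p : ℕ} [Fact p.Prime] {K l : ℕ} (hl : l < p) :
    (univ.filter fun q : (Fin l → Fin K) × (Fin l → Fin K) => FF p q = 0).card ≤ K ^ l * l ^ l := by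
  classical
  have : (univ.filter fun q : (Fin l → Fin K) × (Fin l → Fin K) => FF p q = 0) ⊆
      (univ : Finset ((Fin l → Fin K) × (Fin l → Fin l))).image fun r => (r.1 ∘ r.2, r.1) := by
    intro q hq
    simp only [mem_filter, mem_univ, true_and] at hq
    choose φ hφ using FF_zero hl q hq
    simp only [mem_image, mem_univ, true_and]
    exact ⟨(q.2, φ), by ext i <;> simp [hφ]⟩
  refine (card_le_card this).trans (card_image_le.trans ?_)
  simp

noncomputable def S {p : ℕ} [Fact p.Prime] (N K : ℕ) (a : ZMod p) : ℂ :=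
  ∑ n : Fin N, ∑ j : Fin K, e (a * (((n : ℕ) + 1 + j).factorial : ZMod p))

lemma S_norm {p : ℕ} [Fact p.Prime] (N K : ℕ) (a : ZMod p) : ‖S N K a‖ ≤ N * K := by
  refine (norm_sum_le _ _).trans ?_
  refine (sum_le_sum fun n _ => norm_sum_le _ _).trans ?_
  simp [e_norm]

lemma S_moment {p : ℕ} [Fact p.Prime] {N K l : ℕ} (hN : N + 1 < p) (hl : l < p) (hl0 : 0 < l) :
    ∑ a : ZMod p, ‖S N K a‖ ^ (2 * l) ≤
      p * (N : ℝ) ^ (2 * l - 1) * (N * (l ^ l * K ^ l) + K ^ (2 * l + 1)) := by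
  classical
  have h1 : ∀ a : ZMod p, ‖S N K a‖ ^ (2 * l) ≤ (N : ℝ) ^ (2 * l - 1) *
      ∑ n : Fin N, ‖∑ j : Fin K, e (a * (((n : ℕ) + 1 + j).factorial : ZMod p))‖ ^ (2 * l) := by
    intro a
    obtain ⟨k, hk⟩ : ∃ k, 2 * l = k + 1 := ⟨2 * l - 1, by omega⟩
    rw [hk, Nat.add_sub_cancel]
    refine (pow_le_pow_left₀ (norm_nonneg _) (norm_sum_le _ _) _).trans ?_
    refine (pow_sum_le_card_mul_sum_pow (fun _ _ => norm_nonneg _) k).trans ?_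
    simp
  refine (sum_le_sum fun a _ => h1 a).trans ?_
  rw [← mul_sum, sum_comm, mul_comm (p : ℝ), mul_assoc]
  gcongr
  simp only [moment]
  rw [← mul_sum]
  gcongr
  have h4 : ∀ n : Fin N, (univ.filter fun q : (Fin l → Fin K) × (Fin l → Fin K) =>
      ∑ i, (((n : ℕ) + 1 + (q.1 i)).factorial : ZMod p) =
        ∑ i, (((n : ℕ) + 1 + (q.2 i)).factorial : ZMod p)).card =
      ∑ q : (Fin l → Fin K) × (Fin l → Fin K),
        if (FF p q).eval (((n : ℕ) + 2 : ℕ) : ZMod p) = 0 then 1 else 0 := by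
    intro n
    rw [card_filter]
    refine sum_congr rfl fun q _ => if_congr ?_ rfl rfl
    simp only [fac_eq, ← mul_sum]
    rw [mul_right_inj' (fac_ne (by omega)), FF, eval_sub, sub_eq_zero, eval_finsetSum,
      eval_finsetSum]
  have h5 : ∑ n : Fin N, (univ.filter fun q : (Fin l → Fin K) × (Fin l → Fin K) =>
      ∑ i, (((n : ℕ) + 1 + (q.1 i)).factorial : ZMod p) =
        ∑ i, (((n : ℕ) + 1 + (q.2 i)).factorial : ZMod p)).card ≤
      N * (l ^ l * K ^ l) + K ^ (2 * l + 1) := by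
    rw [sum_congr rfl fun n _ => h4 n, sum_comm]
    have h6 : ∀ q : (Fin l → Fin K) × (Fin l → Fin K),
        (∑ n : Fin N, if (FF p q).eval (((n : ℕ) + 2 : ℕ) : ZMod p) = 0 then 1 else 0) ≤
          (if FF p q = 0 then N else 0) + K := by
      intro q
      rw [← card_filter]
      split_ifs with h
      · refine le_add_right ((card_filter_le _ _).trans ?_)
        simp
      · rw [zero_add]
        exact roots_count hN _ h (FF_deg q)
    refine (sum_le_sum fun q _ => h6 q).trans ?_
    rw [sum_add_distrib, ← sum_filter, sum_const, sum_const, smul_eq_mul, smul_eq_mul, mul_comm _ N]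
    refine add_le_add (Nat.mul_le_mul_left _ ?_) ?_
    · rw [mul_comm]; exact FF_card hl
    · rw [card_univ]; simp; apply le_of_eq; ring
  exact_mod_cast h5


noncomputable def h {p : ℕ} [Fact p.Prime] (N K : ℕ) (w : ZMod p → ℝ) (x : ZMod p) : ℝ :=
  ∑ n : Fin N, ∑ r : Fin K × ZMod p,
    if r.2 * (((n : ℕ) + 1 + r.1).factorial : ZMod p) = x then w r.2 else 0

lemma h_nonneg {p : ℕ} [Fact p.Prime] (N K : ℕ) (w : ZMod p → ℝ) (hw : ∀ a, 0 ≤ w a)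
    (x : ZMod p) : 0 ≤ h N K w x := by
  refine sum_nonneg fun n _ => sum_nonneg fun r _ => ?_
  split_ifs
  · exact hw _
  · exact le_rfl

lemma h_mul {p : ℕ} [Fact p.Prime] (N K : ℕ) (w : ZMod p → ℝ) (G : ZMod p → ℝ) :
    ∑ x, h N K w x * G x = ∑ a, w a * ∑ n : Fin N, ∑ j : Fin K,
      G (a * (((n : ℕ) + 1 + j).factorial : ZMod p)) := by
  simp only [h, sum_mul, mul_sum, ite_mul, zero_mul]
  rw [sum_comm, sum_comm (s := (univ : Finset (ZMod p)))]
  refine sum_congr rfl fun n _ => ?_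
  rw [sum_comm, Fintype.sum_prod_type, sum_comm]
  refine sum_congr rfl fun j _ => sum_congr rfl fun a _ => ?_
  simp

lemma h_sum {p : ℕ} [Fact p.Prime] (N K : ℕ) (w : ZMod p → ℝ) :
    ∑ x, h N K w x = N * K * ∑ a, w a := by
  have := h_mul N K w (fun _ => 1)
  simp only [mul_one] at this
  rw [this, mul_sum]
  refine sum_congr rfl fun a _ => ?_
  simp
  ring

lemma h_coll {p : ℕ} [Fact p.Prime] {N K : ℕ} (hN : N + K + 1 < p) (r s : Fin K × ZMod p)
    (hr : r.2 ≠ 0) (hs : s.2 ≠ 0) (hne : r ≠ s) :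
    (univ.filter fun n : Fin N => r.2 * (((n : ℕ) + 1 + r.1).factorial : ZMod p) =
      s.2 * (((n : ℕ) + 1 + s.1).factorial : ZMod p)).card ≤ K := by
  by_cases hj : r.1 = s.1
  · rw [filter_false_of_mem]
    · simp
    intro n _ hn
    rw [hj] at hn
    have := mul_right_cancel₀ (fac_ne (by omega)) hn
    exact hne (Prod.ext hj this)
  · let F : (ZMod p)[X] := C r.2 * ascPochhammer (ZMod p) r.1 - C s.2 * ascPochhammer (ZMod p) s.1
    have hd1 : (C r.2 * ascPochhammer (ZMod p) r.1).natDegree = r.1 := by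
      rw [natDegree_C_mul hr, ascPochhammer_natDegree]
    have hd2 : (C s.2 * ascPochhammer (ZMod p) s.1).natDegree = s.1 := by
      rw [natDegree_C_mul hs, ascPochhammer_natDegree]
    have hF : F ≠ 0 := by
      intro h0
      have := sub_eq_zero.1 h0
      rw [this, hd2] at hd1
      exact hj (Fin.ext hd1.symm)
    have hd : F.natDegree ≤ K := by
      refine (natDegree_sub_le _ _).trans (max_le ?_ ?_)
      · rw [hd1]; exact r.1.is_lt.le
      · rw [hd2]; exact s.1.is_lt.le
    refine le_trans (le_of_eq ?_) (roots_count (N := N) (by omega) F hF hd)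
    congr 1
    refine filter_congr fun n _ => ?_
    simp only [F, fac_eq, eval_sub, eval_mul, eval_C]
    rw [mul_left_comm, mul_left_comm s.2, mul_right_inj' (fac_ne (by omega)), sub_eq_zero]

lemma h_sq {p : ℕ} [Fact p.Prime] {N K : ℕ} (hN : N + K + 1 < p) (w : ZMod p → ℝ)
    (hw : ∀ a, 0 ≤ w a) (hw0 : w 0 = 0) :
    ∑ x, h N K w x ^ 2 ≤ N * (N * K * ∑ a, w a ^ 2 + K ^ 3 * (∑ a, w a) ^ 2) := by
  have h1 : ∀ x, h N K w x ^ 2 ≤ N * ∑ n : Fin N, (∑ r : Fin K × ZMod p,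
    if r.2 * (((n : ℕ) + 1 + r.1).factorial : ZMod p) = x then w r.2 else 0) ^ 2 := by
    intro x
    refine sq_sum_le_card_mul_sum_sq.trans ?_
    simp
  refine (sum_le_sum fun x _ => h1 x).trans ?_
  rw [← mul_sum]
  gcongr
  rw [sum_comm]
  have h2 : ∀ n : Fin N, ∑ x : ZMod p, (∑ r : Fin K × ZMod p,
      if r.2 * (((n : ℕ) + 1 + r.1).factorial : ZMod p) = x then w r.2 else 0) ^ 2 =
      ∑ r : Fin K × ZMod p, ∑ s : Fin K × ZMod p, w r.2 * w s.2 *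
        (if r.2 * (((n : ℕ) + 1 + r.1).factorial : ZMod p) =
          s.2 * (((n : ℕ) + 1 + s.1).factorial : ZMod p) then 1 else 0) := by
    intro n
    simp only [sq, sum_mul_sum]
    rw [sum_comm]
    refine sum_congr rfl fun r _ => ?_
    rw [sum_comm]
    refine sum_congr rfl fun s _ => ?_
    simp only [ite_mul, zero_mul, sum_ite_eq, mem_univ, if_true, mul_ite, mul_zero, mul_one]
  rw [sum_congr rfl fun n _ => h2 n, sum_comm]
  have h3 : ∀ r s : Fin K × ZMod p, ∑ n : Fin N, w r.2 * w s.2 *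
        (if r.2 * (((n : ℕ) + 1 + r.1).factorial : ZMod p) =
          s.2 * (((n : ℕ) + 1 + s.1).factorial : ZMod p) then (1 : ℝ) else 0) ≤
        (if r = s then N * (w r.2 * w s.2) else 0) + K * (w r.2 * w s.2) := by
    intro r s
    rw [← mul_sum]
    by_cases hr : r.2 = 0
    · simp [hr, hw0]
    by_cases hs : s.2 = 0
    · simp [hs, hw0]
    have hww := mul_nonneg (hw r.2) (hw s.2)
    rw [← sum_filter, sum_const, nsmul_eq_mul, mul_one]
    by_cases hrs : r = s
    · rw [if_pos hrs]
      have : ((univ.filter fun n : Fin N => r.2 * (((n : ℕ) + 1 + r.1).factorial : ZMod p) =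
        s.2 * (((n : ℕ) + 1 + s.1).factorial : ZMod p)).card : ℝ) ≤ N := by
        have := card_filter_le (univ : Finset (Fin N)) fun n : Fin N =>
          r.2 * (((n : ℕ) + 1 + r.1).factorial : ZMod p) =
          s.2 * (((n : ℕ) + 1 + s.1).factorial : ZMod p)
        rw [card_univ, Fintype.card_fin] at this
        exact_mod_cast this
      have h5 := mul_le_mul_of_nonneg_left this hww
      have h6 : 0 ≤ (K : ℝ) * (w r.2 * w s.2) := by positivity
      linarith
    · rw [if_neg hrs, zero_add, mul_comm]
      refine mul_le_mul_of_nonneg_right ?_ hww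
      exact_mod_cast h_coll hN r s hr hs hrs
  have h4 : ∀ r : Fin K × ZMod p, ∑ n : Fin N, ∑ s : Fin K × ZMod p, w r.2 * w s.2 *
        (if r.2 * (((n : ℕ) + 1 + r.1).factorial : ZMod p) =
          s.2 * (((n : ℕ) + 1 + s.1).factorial : ZMod p) then (1 : ℝ) else 0) ≤
        N * w r.2 ^ 2 + K * (w r.2 * (K * ∑ a, w a)) := by
    intro r
    rw [sum_comm]
    refine (sum_le_sum fun s _ => h3 r s).trans (le_of_eq ?_)
    rw [sum_add_distrib, ← mul_sum, ← mul_sum, sum_ite_eq, if_pos (mem_univ _),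
      Fintype.sum_prod_type]
    simp only [sum_const, card_univ, Fintype.card_fin, nsmul_eq_mul, ← mul_sum]
    ring
  refine (sum_le_sum fun r _ => h4 r).trans (le_of_eq ?_)
  rw [sum_add_distrib, ← mul_sum, ← mul_sum, ← sum_mul, Fintype.sum_prod_type,
    Fintype.sum_prod_type]
  simp
  ring

lemma E_bound {p : ℕ} [Fact p.Prime] {N K : ℕ} (w G : ZMod p → ℝ)
    (hw : ∀ a, 0 ≤ w a) :
    (∑ x, h N K w x * G x) ^ 4 ≤
      (∑ x, h N K w x) ^ 2 * (∑ x, h N K w x ^ 2) * ∑ x, G x ^ 4 := by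
  have h1 : (∑ x, h N K w x * G x) ^ 2 ≤ (∑ x, h N K w x) * ∑ x, h N K w x * G x ^ 2 := by
    refine sum_sq_le_sum_mul_sum_of_sq_le_mul _ (fun x _ => h_nonneg N K w hw x)
      (fun x _ => mul_nonneg (h_nonneg N K w hw x) (sq_nonneg _)) (fun x _ => le_of_eq (by ring))
  have h2 : (∑ x, h N K w x * G x ^ 2) ^ 2 ≤ (∑ x, h N K w x ^ 2) * ∑ x, G x ^ 4 := by
    refine (sum_mul_sq_le_sq_mul_sq _ _ _).trans (le_of_eq ?_)
    simp only [← pow_mul]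
  calc (∑ x, h N K w x * G x) ^ 4 = ((∑ x, h N K w x * G x) ^ 2) ^ 2 := by ring
    _ ≤ ((∑ x, h N K w x) * ∑ x, h N K w x * G x ^ 2) ^ 2 := by gcongr
    _ = (∑ x, h N K w x) ^ 2 * (∑ x, h N K w x * G x ^ 2) ^ 2 := by ring
    _ ≤ (∑ x, h N K w x) ^ 2 * ((∑ x, h N K w x ^ 2) * ∑ x, G x ^ 4) := by gcongr
    _ = _ := by ring

/-- If there is no representation, the main term is dominated by the error term. -/
lemma no_rep {p : ℕ} [Fact p.Prime] {N K₁ K₂ K₃ k : ℕ} (lam : ZMod p)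
    (hno : ∀ (x : Fin N × Fin K₂) (y : Fin N × Fin K₃) (z : Fin k → Fin N × Fin K₁),
      (((x.1 : ℕ) + 1 + x.2).factorial : ZMod p) * (((y.1 : ℕ) + 1 + y.2).factorial : ZMod p)
        + ∑ i, ((((z i).1 : ℕ) + 1 + (z i).2).factorial : ZMod p) ≠ lam) :
    ((N * K₂ : ℝ) * (N * K₃) * (N * K₁) ^ k) ≤
      ∑ x, h N K₂ (fun a : ZMod p => if a = 0 then 0 else ‖S N K₁ a‖ ^ k) x * ‖S N K₃ x‖ := by
  classical
  let W : ZMod p → ℂ := fun a => ∑ x : Fin N × Fin K₂,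
    S N K₃ (a * (((x.1 : ℕ) + 1 + x.2).factorial : ZMod p))
  have hS : ∀ (K : ℕ) (a : ZMod p), S N K a =
      ∑ x : Fin N × Fin K, e (a * (((x.1 : ℕ) + 1 + x.2).factorial : ZMod p)) := by
    intro K a
    rw [S, Fintype.sum_prod_type]
  have hzero : ∑ a : ZMod p, W a * S N K₁ a ^ k * e (a * (-lam)) = 0 := by
    have : ∀ a : ZMod p, W a * S N K₁ a ^ k * e (a * (-lam)) =
        ∑ x : Fin N × Fin K₂, ∑ y : Fin N × Fin K₃, ∑ z : Fin k → Fin N × Fin K₁,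
        e (a * ((((x.1 : ℕ) + 1 + x.2).factorial : ZMod p) *
          (((y.1 : ℕ) + 1 + y.2).factorial : ZMod p)
        + ∑ i, ((((z i).1 : ℕ) + 1 + (z i).2).factorial : ZMod p) - lam)) := by
      intro a
      simp only [W, hS, Fintype.sum_pow, sum_mul]
      refine sum_congr rfl fun x _ => sum_congr rfl fun y _ => ?_
      rw [mul_sum, sum_mul]
      refine sum_congr rfl fun z _ => ?_
      rw [← e_sum, ← e_add, ← e_add, ← mul_sum]
      congr 1
      ring
    rw [sum_congr rfl fun a _ => this a, sum_comm]
    refine sum_eq_zero fun x _ => ?_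
    rw [sum_comm]
    refine sum_eq_zero fun y _ => ?_
    rw [sum_comm]
    refine sum_eq_zero fun z _ => ?_
    rw [orth, if_neg]
    exact sub_ne_zero.2 (hno x y z)
  rw [← add_sum_erase _ _ (mem_univ (0 : ZMod p)), add_eq_zero_iff_eq_neg] at hzero
  have hS0 : ∀ K, S N K (0 : ZMod p) = N * K := by
    intro K
    simp [S, e_zero]
  have hmain : ‖W 0 * S N K₁ (0 : ZMod p) ^ k * e (0 * (-lam))‖ =
      (N * K₂ : ℝ) * (N * K₃) * (N * K₁) ^ k := by
    simp [W, hS0, e_norm]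
  rw [← hmain, hzero, norm_neg, h_mul, ← add_sum_erase _ _ (mem_univ (0 : ZMod p))]
  simp only [if_true, zero_mul, zero_add]
  refine (norm_sum_le _ _).trans (sum_le_sum fun a ha => ?_)
  rw [if_neg (ne_of_mem_erase ha), norm_mul, norm_mul, e_norm, mul_one, norm_pow, mul_comm]
  gcongr
  simp only [W]
  refine (norm_sum_le _ _).trans (le_of_eq ?_)
  rw [Fintype.sum_prod_type]

lemma numeric {t c P N K₁ K₂ K₃ M M4 W1 W2 H2 E : ℝ} (hc : c = 23 ^ 23 + 1)
    (hT : 5 * (c ^ 2 * (c + c ^ 2)) < t) (hN : N = t ^ 1300) (hK₁ : K₁ = t ^ 55)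
    (hK₂ : K₂ = t ^ 622) (hK₃ : K₃ = t ^ 433) (hP0 : 0 ≤ P) (hP : P ≤ t ^ 1301)
    (hM : M ≤ P * N ^ 45 * (N * (23 ^ 23 * K₁ ^ 23) + K₁ ^ 47))
    (hM4 : M4 ≤ P * N ^ 3 * (N * (2 ^ 2 * K₃ ^ 2) + K₃ ^ 5)) (hM40 : 0 ≤ M4)
    (hW10 : 0 ≤ W1) (hW1 : W1 ≤ N * K₁ * M) (hW2 : W2 ≤ (N * K₁) ^ 48 * M)
    (hH20 : 0 ≤ H2) (hH2 : H2 ≤ N * (N * K₂ * W2 + K₂ ^ 3 * W1 ^ 2))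
    (hmain : N * K₂ * (N * K₃) * (N * K₁) ^ 47 ≤ E)
    (hE : E ^ 4 ≤ (N * K₂ * W1) ^ 2 * H2 * M4) : False := by
  have hc1 : 1 ≤ c := by rw [hc]; norm_num
  have ht1 : 1 < t := by
    refine lt_of_le_of_lt ?_ hT
    nlinarith [one_le_pow₀ hc1 (n := 2), mul_le_mul (one_le_pow₀ hc1 (n := 2))
      (one_le_pow₀ hc1 (n := 2)) zero_le_one (by positivity)]
  have ht0 : 0 < t := by linarith
  have hc0 : 0 < c := by linarith
  have hN0 : 0 < N := by rw [hN]; positivity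
  have hK10 : 0 < K₁ := by rw [hK₁]; positivity
  have hK20 : 0 < K₂ := by rw [hK₂]; positivity
  have hK30 : 0 < K₃ := by rw [hK₃]; positivity
  -- all in terms of the exponents
  have hM' : M ≤ t ^ 1301 * N ^ 45 * (c * K₁ ^ 47) := by
    have h1 : N * K₁ ^ 23 ≤ K₁ ^ 47 := by
      have h2 : N ≤ K₁ ^ 24 := by
        rw [hN, hK₁, ← pow_mul]
        exact pow_le_pow_right₀ ht1.le (by norm_num)
      calc N * K₁ ^ 23 ≤ K₁ ^ 24 * K₁ ^ 23 := by gcongr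
        _ = _ := by rw [← pow_add]
    have h3 : N * (23 ^ 23 * K₁ ^ 23) + K₁ ^ 47 ≤ c * K₁ ^ 47 := by
      rw [hc, add_mul, one_mul, mul_left_comm]
      gcongr
    refine hM.trans ?_
    gcongr
  have hM4' : M4 ≤ t ^ 1301 * N ^ 3 * (5 * (N * K₃ ^ 2)) := by
    have h1 : K₃ ^ 5 ≤ N * K₃ ^ 2 := by
      have h2 : K₃ ^ 3 ≤ N := by
        rw [hN, hK₃, ← pow_mul]
        exact pow_le_pow_right₀ ht1.le (by norm_num)
      calc K₃ ^ 5 = K₃ ^ 3 * K₃ ^ 2 := by rw [← pow_add]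
        _ ≤ _ := by gcongr
    have h3 : N * (2 ^ 2 * K₃ ^ 2) + K₃ ^ 5 ≤ 5 * (N * K₃ ^ 2) := by linarith
    refine hM4.trans ?_
    gcongr
  obtain ⟨M', hM'd⟩ : ∃ M' : ℝ, M' = t ^ 1301 * N ^ 45 * K₁ ^ 47 := ⟨_, rfl⟩
  have hM'' : M ≤ c * M' := by rw [hM'd]; linarith
  have hM'0 : 0 < M' := by rw [hM'd]; positivity
  have hW1' : W1 ≤ N * K₁ * (c * M') := hW1.trans (by gcongr)
  have hW2' : W2 ≤ (N * K₁) ^ 48 * (c * M') := hW2.trans (by gcongr)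
  have hH2' : H2 ≤ N * (N * K₂ * ((N * K₁) ^ 48 * (c * M')) +
      K₂ ^ 3 * (N * K₁ * (c * M')) ^ 2) := hH2.trans (by gcongr)
  have hfin : (N * K₂ * (N * K₃) * (N * K₁) ^ 47) ^ 4 ≤
      (N * K₂ * (N * K₁ * (c * M'))) ^ 2 * (N * (N * K₂ * ((N * K₁) ^ 48 * (c * M')) +
      K₂ ^ 3 * (N * K₁ * (c * M')) ^ 2)) * (t ^ 1301 * N ^ 3 * (5 * (N * K₃ ^ 2))) := by
    refine (pow_le_pow_left₀ (by positivity) hmain 4).trans (hE.trans ?_)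
    gcongr
  have hM't : M' = t ^ 62386 := by
    rw [hM'd, hN, hK₁, ← pow_mul, ← pow_mul, ← pow_add, ← pow_add]
  have e1 : (N * K₂ * (N * K₃) * (N * K₁) ^ 47) ^ 4 = t ^ 269341 * t ^ 19 := by
    rw [hN, hK₁, hK₂, hK₃]
    simp only [← pow_mul, ← pow_add]
  have e2 : N * K₂ * ((N * K₁) ^ 48 * (c * M')) = c * t ^ 129348 := by
    rw [hM't, hN, hK₁, hK₂, mul_left_comm _ c, mul_left_comm _ c]
    simp only [← pow_mul, ← pow_add]
  have e3 : N * K₁ * (c * M') = c * t ^ 63741 := by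
    rw [hM't, hN, hK₁, mul_left_comm _ c]
    simp only [← pow_mul, ← pow_add]
  have e4 : K₂ ^ 3 * (N * K₁ * (c * M')) ^ 2 = c ^ 2 * t ^ 129348 := by
    rw [e3, hK₂, mul_pow, mul_left_comm _ (c ^ 2)]
    simp only [← pow_mul, ← pow_add]
  have e5 : (N * K₂ * (N * K₁ * (c * M'))) ^ 2 = c ^ 2 * t ^ 131326 := by
    rw [e3, hN, hK₂, mul_left_comm _ c, mul_pow]
    simp only [← pow_mul, ← pow_add]
  have e6 : t ^ 1301 * N ^ 3 * (5 * (N * K₃ ^ 2)) = 5 * t ^ 7367 := by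
    rw [hN, hK₃, mul_left_comm _ (5 : ℝ)]
    simp only [← pow_mul, ← pow_add]
  have e7 : N * (c * t ^ 129348 + c ^ 2 * t ^ 129348) = (c + c ^ 2) * t ^ 130648 := by
    rw [hN, ← add_mul, mul_left_comm]
    simp only [← pow_add]
  rw [e5, e1, e2, e4, e7, e6] at hfin
  have hfin2 : t ^ 269341 * t ^ 19 ≤ t ^ 269341 * (5 * (c ^ 2 * (c + c ^ 2))) := by
    refine hfin.trans (le_of_eq ?_)
    have e8 : t ^ 269341 = t ^ 131326 * t ^ 130648 * t ^ 7367 := by simp only [← pow_add]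
    rw [e8]
    generalize t ^ 131326 = u1
    generalize t ^ 130648 = u2
    generalize t ^ 7367 = u3
    ring
  have hfin3 := le_of_mul_le_mul_left hfin2 (by positivity)
  have : t ≤ t ^ 19 := le_self_pow₀ ht1.le (by norm_num)
  linarith

lemma exists_rep {p T N K₁ K₂ K₃ : ℕ} [Fact p.Prime] (hT : (5 * (((23 : ℝ) ^ 23 + 1) ^ 2 *
      (((23 : ℝ) ^ 23 + 1) + ((23 : ℝ) ^ 23 + 1) ^ 2)) : ℝ) < T)
    (hNT : N = T ^ 1300) (hK₁ : K₁ = T ^ 55) (hK₂ : K₂ = T ^ 622) (hK₃ : K₃ = T ^ 433)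
    (hp : p ≤ T ^ 1301) (hN : N + K₂ + 23 < p) (lam : ZMod p) :
    ∃ (x : Fin N × Fin K₂) (y : Fin N × Fin K₃) (z : Fin 47 → Fin N × Fin K₁),
      (((x.1 : ℕ) + 1 + x.2).factorial : ZMod p) * (((y.1 : ℕ) + 1 + y.2).factorial : ZMod p)
        + ∑ i, ((((z i).1 : ℕ) + 1 + (z i).2).factorial : ZMod p) = lam := by
  by_contra! hno
  have hmain := no_rep lam hno
  have hm46 := S_moment (p := p) (N := N) (K := K₁) (l := 23) (by omega) (by omega) (by omega)
  have hm4 := S_moment (p := p) (N := N) (K := K₃) (l := 2) (by omega) (by omega) (by omega)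
  set w : ZMod p → ℝ := fun a => if a = 0 then 0 else ‖S N K₁ a‖ ^ 47 with hwdef
  have hw : ∀ a, 0 ≤ w a := by
    intro a
    simp only [hwdef]
    split_ifs
    · exact le_rfl
    · positivity
  have hw0 : w 0 = 0 := by simp [hwdef]
  have hE := E_bound (N := N) (K := K₂) w (fun x => ‖S N K₃ x‖) hw
  have hsq := h_sq (N := N) (K := K₂) (by omega) w hw hw0
  rw [h_sum] at hE
  have hnorm := S_norm (p := p) N K₁
  have hw1 : ∑ a, w a ≤ N * K₁ * ∑ a : ZMod p, ‖S N K₁ a‖ ^ 46 := by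
    rw [mul_sum]
    refine sum_le_sum fun a _ => ?_
    simp only [hwdef]
    split_ifs
    · positivity
    · rw [pow_succ' _ 46]
      gcongr
      exact hnorm a
  have hw2 : ∑ a, w a ^ 2 ≤ (N * K₁) ^ 48 * ∑ a : ZMod p, ‖S N K₁ a‖ ^ 46 := by
    rw [mul_sum]
    refine sum_le_sum fun a _ => ?_
    simp only [hwdef]
    split_ifs
    · rw [zero_pow (by norm_num)]; positivity
    · rw [← pow_mul, show 47 * 2 = 48 + 46 from rfl, pow_add]
      gcongr
      exact hnorm a
  refine numeric (t := T) (P := p) (N := N) (K₁ := K₁) (K₂ := K₂) (K₃ := K₃) rfl hT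
    (by rw [hNT, Nat.cast_pow]) (by rw [hK₁, Nat.cast_pow]) (by rw [hK₂, Nat.cast_pow])
    (by rw [hK₃, Nat.cast_pow]) (Nat.cast_nonneg _) ?_ hm46 hm4
    (sum_nonneg fun _ _ => by positivity) (sum_nonneg fun a _ => hw a) hw1 hw2
    (sum_nonneg fun _ _ => sq_nonneg _) hsq hmain hE
  rw [← Nat.cast_pow]
  exact Nat.cast_le.2 hp

/-- choice of the scale -/
lemma scale (d p₁ p : ℕ) (hd : d = 1300) (hpp : (p₁ + 25 * 2 ^ d + 2) ^ (d + 1) ≤ p) :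
    ∃ U : ℕ, p₁ ≤ U ∧ p ≤ (U + 1) ^ (d + 1) ∧ (U + 1) ^ d + (U + 1) ^ 622 + 23 < p ∧
      U ^ (d + 1) ≤ p ∧ (U + 1) ^ d ≤ 2 ^ d * U ^ d := by
  have hex : ∃ T : ℕ, p < (T + 1) ^ (d + 1) :=
    ⟨p, lt_of_lt_of_le (Nat.lt_succ_self p) (Nat.le_self_pow (by omega) _)⟩
  obtain ⟨U, hU1, hU2⟩ : ∃ U : ℕ, U ^ (d + 1) ≤ p ∧ p < (U + 1) ^ (d + 1) := by
    classical
    refine ⟨Nat.find hex, ?_, Nat.find_spec hex⟩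
    rcases Nat.eq_zero_or_pos (Nat.find hex) with h0 | h0
    · rw [h0, zero_pow (by omega)]; exact Nat.zero_le _
    · have := Nat.find_min hex (Nat.sub_lt h0 one_pos)
      have h1 : Nat.find hex - 1 + 1 = Nat.find hex := by omega
      rw [h1] at this
      exact not_lt.1 this
  have hUT : p₁ + 25 * 2 ^ d + 2 < U + 1 :=
    lt_of_pow_lt_pow_left₀ (d + 1) (Nat.zero_le _) (hpp.trans_lt hU2)
  have hbig : (U + 1) ^ d ≤ 2 ^ d * U ^ d := by
    rw [← mul_pow]
    exact Nat.pow_le_pow_left (by omega) _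
  refine ⟨U, by omega, hU2.le, ?_, hU1, hbig⟩
  have hUp : 0 < U ^ d := Nat.pow_pos (by omega)
  have h1 : (U + 1) ^ 622 ≤ (U + 1) ^ d := Nat.pow_le_pow_right (by omega) (by omega)
  have h2 : U ^ d * U ≤ p := by rw [← pow_succ]; exact hU1
  have h3 : U ^ d * (25 * 2 ^ d + 1) ≤ U ^ d * U := Nat.mul_le_mul_left _ (by omega)
  have h4 : 1 ≤ (U + 1) ^ d := Nat.one_le_pow _ _ (by omega)
  generalize (U + 1) ^ d = a at *
  generalize (U + 1) ^ 622 = b at *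
  generalize U ^ d = u at *
  generalize 2 ^ d = v at *
  nlinarith

lemma root_le (d U p : ℕ) (hd : d = 1300) (hUp : U ^ (d + 1) ≤ p) :
    (U : ℝ) ^ d ≤ (p : ℝ) ^ ((1300 : ℝ) / 1301) := by
  have h0 : (U : ℝ) ^ (d + 1) ≤ p := by
    rw [← Nat.cast_pow]
    exact Nat.cast_le.2 hUp
  have h1 : ((U : ℝ) ^ (d + 1)) ^ ((1300 : ℝ) / 1301) = (U : ℝ) ^ d := by
    rw [← Real.rpow_natCast, ← Real.rpow_mul (Nat.cast_nonneg _), ← Real.rpow_natCast _ d]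
    congr 1
    push_cast
    rw [hd]
    norm_num
  have h2 : (0 : ℝ) ≤ (U : ℝ) ^ (d + 1) := pow_nonneg (Nat.cast_nonneg _) _
  have h3 : (0 : ℝ) ≤ (1300 : ℝ) / 1301 := by norm_num
  have h4 := Real.rpow_le_rpow h2 h0 h3
  rw [h1] at h4
  exact h4

end FactRep

theorem stmt_15 :
    ∃ C : ℝ, 0 < C ∧ ∃ p₀ : ℕ, ∀ p : ℕ, p.Prime → p₀ ≤ p → ∀ lam : ZMod p,
      ∃ (m n : ℕ) (f : Fin 47 → ℕ),
        1 ≤ m ∧ 1 ≤ n ∧ (∀ i, 1 ≤ f i) ∧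
        (m : ℝ) ≤ C * (p : ℝ) ^ ((1300 : ℝ) / 1301) ∧
        (n : ℝ) ≤ C * (p : ℝ) ^ ((1300 : ℝ) / 1301) ∧
        (∀ i, (f i : ℝ) ≤ C * (p : ℝ) ^ ((1300 : ℝ) / 1301)) ∧
        (Nat.factorial m : ZMod p) * (Nat.factorial n : ZMod p)
          + ∑ i, (Nat.factorial (f i) : ZMod p) = lam := by
  obtain ⟨T0, hT0⟩ := exists_nat_gt (5 * (((23 : ℝ) ^ 23 + 1) ^ 2 *
      (((23 : ℝ) ^ 23 + 1) + ((23 : ℝ) ^ 23 + 1) ^ 2)) : ℝ)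
  obtain ⟨d, hd⟩ : ∃ d : ℕ, d = 1300 := ⟨_, rfl⟩
  refine ⟨2 * 2 ^ d, by positivity, (T0 + 25 * 2 ^ d + 2) ^ (d + 1), fun p hp hpp lam => ?_⟩
  have : Fact p.Prime := ⟨hp⟩
  obtain ⟨U, hTU, hpU, hlt, hUp, hbig⟩ := FactRep.scale d T0 p hd hpp
  obtain ⟨N, hN⟩ : ∃ N : ℕ, N = (U + 1) ^ d := ⟨_, rfl⟩
  obtain ⟨K₁, hK₁⟩ : ∃ K₁ : ℕ, K₁ = (U + 1) ^ 55 := ⟨_, rfl⟩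
  obtain ⟨K₂, hK₂⟩ : ∃ K₂ : ℕ, K₂ = (U + 1) ^ 622 := ⟨_, rfl⟩
  obtain ⟨K₃, hK₃⟩ : ∃ K₃ : ℕ, K₃ = (U + 1) ^ 433 := ⟨_, rfl⟩
  have hKN : ∀ k ≤ 1300, (U + 1) ^ k ≤ N := fun k hk => by
    rw [hN]; exact Nat.pow_le_pow_right (by omega) (by omega)
  obtain ⟨x, y, z, hxyz⟩ := FactRep.exists_rep (p := p) (T := U + 1) (N := N) (K₁ := K₁)
    (K₂ := K₂) (K₃ := K₃)
    (hT0.trans (by exact_mod_cast (by omega : T0 < U + 1))) (by rw [hN, hd]) hK₁ hK₂ hK₃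
    (by rw [hd] at hpU; exact hpU) (by rw [hN, hK₂]; exact hlt) lam
  have hUR := FactRep.root_le d U p hd hUp
  have hbd : ∀ K : ℕ, K ≤ N → ∀ v : Fin N × Fin K,
      (((v.1 : ℕ) + 1 + v.2 : ℕ) : ℝ) ≤ 2 * 2 ^ d * (p : ℝ) ^ ((1300 : ℝ) / 1301) := by
    intro K hK v
    have h1 := v.1.is_lt
    have h2 := v.2.is_lt
    rw [← hN] at hbig
    have h4 : (v.1 : ℕ) + 1 + v.2 ≤ 2 * (2 ^ d * U ^ d) := by
      clear hpp hlt hUp hpU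
      generalize 2 ^ d * U ^ d = q at *
      omega
    calc (((v.1 : ℕ) + 1 + v.2 : ℕ) : ℝ) ≤ ((2 * (2 ^ d * U ^ d) : ℕ) : ℝ) := Nat.cast_le.2 h4
      _ = 2 * 2 ^ d * (U : ℝ) ^ d := by push_cast; rw [mul_assoc]
      _ ≤ _ := by gcongr
  refine ⟨(x.1 : ℕ) + 1 + x.2, (y.1 : ℕ) + 1 + y.2, fun i => ((z i).1 : ℕ) + 1 + (z i).2,
    by omega, by omega, fun i => Nat.le_add_right_of_le (Nat.le_add_left 1 _),
    hbd _ ?_ x, hbd _ ?_ y, fun i => hbd _ ?_ (z i), hxyz⟩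
  · rw [hK₂]; exact hKN _ (by norm_num)
  · rw [hK₃]; exact hKN _ (by norm_num)
  · rw [hK₁]; exact hKN _ (by norm_num)
end
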